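/- arXiv:1612.06584 — 3 statements merged into one kernel-verified Lean document; each statement's English description precedes it below -/
import Mathlib

section
/- Let p be a prime, let M be a Lie algebra over ℚ_p, and let L ⊆ M be a ℤ_p-Lie subalgebra (a ℤ_p-submodule of M, via restriction of scalars, closed under the Lie bracket) which is nilpotent of nilpotency class exactly c ≥ 1. Define L̂ = L + p^{-1}·γ_2(L) + p^{-2}·γ_3(L) + ⋯ + p^{-(c-1)}·γ_c(L), the ℤ_p-submodule of M equal to the sum of the scalar multiples p^{-(i-1)}·γ_i(L) for 1 ≤ i ≤ c. Then L̂ is closed under the Lie bracket, L̂ is nilpotent of nilpotency class exactly c, and ⁅L̂, L̂⁆ ⊆ p·L̂ (that is, L̂ is a powerful ℤ_p-Lie algebra). -/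
/-!
Write `g i = γ_{i+1}(L)`. The Jacobi identity gives `⁅g i, g j⁆ ⊆ g (i + j + 1)`
(`bracket_mem_gammaS`), hence
`⁅p⁻ⁱ g i, p⁻ʲ g j⁆ ⊆ p · p^{-(i+j+1)} g (i + j + 1)`: bracketing always leaves one spare factor
of `p`. With the descending filtration `F k = ∑_{i ≥ k} p⁻ⁱ g i` this reads
`⁅F k, F 0⁆ ⊆ p · F (k + 1)` (`bracket_mem_tail`).

Since `g i = 0` for `i ≥ c`, we have `F 0 = L̂` and `F c = 0`. The case `k = 0` says that `L̂` is
closed under the bracket and powerful, and iterating over `k` gives `γ_{k+1}(L̂) ⊆ F k`, so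
`γ_{c+1}(L̂) = 0`. The class does not drop because `L ⊆ L̂` forces `γ_c(L) ⊆ γ_c(L̂)`.
-/

open Pointwise

/-- For `Z_p`-submodules `A B` of `M`, the `Z_p`-submodule spanned by brackets `⁅x, y⁆` with
`x ∈ A`, `y ∈ B`. -/
def bracketSpan (R M : Type*) [CommRing R] [LieRing M] [Module R M]
    (A B : Submodule R M) : Submodule R M :=
  Submodule.span R {z : M | ∃ x ∈ A, ∃ y ∈ B, z = ⁅x, y⁆}

/-- The lower central series of a submodule `S` closed under the bracket:
`gammaS R M S (i - 1)` is `γ_i(S)`, i.e. `gammaS R M S 0 = S = γ_1(S)` and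
`gammaS R M S i = γ_{i+1}(S) = ⁅γ_i(S), S⁆`. -/
def gammaS (R M : Type*) [CommRing R] [LieRing M] [Module R M]
    (S : Submodule R M) : ℕ → Submodule R M
  | 0 => S
  | i + 1 => bracketSpan R M (gammaS R M S i) S

/-- The left-normed iterated bracket: `leftIter R M I S i = [I, S, …, S]` with `i` copies
of `S`. -/
def leftIter (R M : Type*) [CommRing R] [LieRing M] [Module R M]
    (I S : Submodule R M) : ℕ → Submodule R M
  | 0 => I
  | i + 1 => bracketSpan R M (leftIter R M I S i) S

/-- `LhatDef p M L c = L + p⁻¹·γ_2(L) + p⁻²·γ_3(L) + ⋯ + p^{-(c-1)}·γ_c(L)` as a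
`ℤ_[p]`-submodule of `M`. -/
noncomputable def LhatDef (p : ℕ) [Fact p.Prime] (M : Type*) [LieRing M]
    [LieAlgebra ℚ_[p] M] [Module ℤ_[p] M] [IsScalarTower ℤ_[p] ℚ_[p] M]
    (L : Submodule ℤ_[p] M) (c : ℕ) : Submodule ℤ_[p] M :=
  ⨆ i ∈ Finset.range c, (((p : ℚ_[p]) ^ i)⁻¹) • gammaS ℤ_[p] M L i

/-- `IhatDef p M I L c = I + p⁻¹·[I,L] + p⁻²·[I,L,L] + ⋯ + p^{-(c-1)}·[I, _(c-1) L]` as a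
`ℤ_[p]`-submodule of `M`. -/
noncomputable def IhatDef (p : ℕ) [Fact p.Prime] (M : Type*) [LieRing M]
    [LieAlgebra ℚ_[p] M] [Module ℤ_[p] M] [IsScalarTower ℤ_[p] ℚ_[p] M]
    (I L : Submodule ℤ_[p] M) (c : ℕ) : Submodule ℤ_[p] M :=
  ⨆ i ∈ Finset.range c, (((p : ℚ_[p]) ^ i)⁻¹) • leftIter ℤ_[p] M I L i

theorem gammaS_mono {R M : Type*} [CommRing R] [LieRing M] [Module R M] {S T : Submodule R M}
    (h : S ≤ T) (k : ℕ) : gammaS R M S k ≤ gammaS R M T k := by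
  induction k with
  | zero => exact h
  | succ k ih =>
    refine Submodule.span_mono ?_
    rintro z ⟨x, hx, y, hy, rfl⟩
    exact ⟨x, ih hx, y, h hy, rfl⟩

theorem gammaS_eq_bot {R M : Type*} [CommRing R] [LieRing M] [Module R M] {S : Submodule R M}
    {c : ℕ} (h : gammaS R M S c = ⊥) {k : ℕ} (hk : c ≤ k) : gammaS R M S k = ⊥ := by
  induction k, hk using Nat.le_induction with
  | base => exact h
  | succ k _ ih =>
    refine Submodule.span_eq_bot.2 ?_
    rintro z ⟨x, hx, y, -, rfl⟩
    rw [ih, Submodule.mem_bot] at hx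
    rw [hx, zero_lie]

theorem lie_mem_comm {R M : Type*} [CommRing R] [LieRing M] [Module R M] {N : Submodule R M}
    {x y : M} : ⁅x, y⁆ ∈ N ↔ ⁅y, x⁆ ∈ N := by
  rw [← lie_skew, N.neg_mem_iff]

section

variable (p : ℕ) [Fact p.Prime] {M : Type*} [LieRing M] [LieAlgebra ℚ_[p] M] [Module ℤ_[p] M]
  [IsScalarTower ℤ_[p] ℚ_[p] M]

/-- The restriction of scalars of a `ℚ_[p]`-Lie algebra is a `ℤ_[p]`-Lie algebra. -/
abbrev padicIntLieAlgebra : LieAlgebra ℤ_[p] M where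
  lie_smul a x y := by
    rw [← algebraMap_smul ℚ_[p] a y, ← algebraMap_smul ℚ_[p] a ⁅x, y⁆, lie_smul]

variable {p}

/-- To check that the bracket with `y` maps the span of `s` into `N`, it suffices to check it
on `s`. -/
theorem lie_mem_of_span {s : Set M} {N : Submodule ℤ_[p] M} {y : M}
    (h : ∀ x ∈ s, ⁅x, y⁆ ∈ N) {x : M} (hx : x ∈ Submodule.span ℤ_[p] s) : ⁅x, y⁆ ∈ N := by
  let := padicIntLieAlgebra p (M := M)
  induction hx using Submodule.span_induction with
  | mem x hx => exact h x hx
  | zero => rw [zero_lie]; exact N.zero_mem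
  | add x z _ _ hx hz => rw [add_lie]; exact N.add_mem hx hz
  | smul a x _ hx => rw [smul_lie]; exact N.smul_mem a hx

/-- `⁅γ_{i+1}(L), γ_{j+1}(L)⁆ ⊆ γ_{i+j+2}(L)`. -/
theorem bracket_mem_gammaS (L : Submodule ℤ_[p] M) (j : ℕ) :
    ∀ (i : ℕ), ∀ x ∈ gammaS ℤ_[p] M L i, ∀ y ∈ gammaS ℤ_[p] M L j,
      ⁅x, y⁆ ∈ gammaS ℤ_[p] M L (i + j + 1) := by
  induction j with
  | zero => exact fun i x hx y hy => Submodule.subset_span ⟨x, hx, y, hy, rfl⟩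
  | succ j ih =>
    intro i x hx y hy
    refine lie_mem_comm.1 (lie_mem_of_span ?_ hy)
    rintro _ ⟨u, hu, v, hv, rfl⟩
    rw [lie_mem_comm, leibniz_lie]
    refine Submodule.add_mem _ (Submodule.subset_span ⟨_, ih i x hx u hu, v, hv, rfl⟩) ?_
    have hxv : ⁅x, v⁆ ∈ gammaS ℤ_[p] M L (i + 1) := Submodule.subset_span ⟨x, hx, v, hv, rfl⟩
    have := ih (i + 1) _ hxv u hu
    rw [show i + 1 + j + 1 = i + (j + 1) + 1 by ring] at this
    exact lie_mem_comm.1 this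

/-- The tail `F k = ∑_{i ≥ k} p⁻ⁱ γ_{i+1}(L)` of the sum defining `L̂`. The index runs over all
`i ≥ k`, with no upper bound; for nilpotent `L` the extra terms vanish. -/
noncomputable def tail (L : Submodule ℤ_[p] M) (k : ℕ) : Submodule ℤ_[p] M :=
  ⨆ i ≥ k, (((p : ℚ_[p]) ^ i)⁻¹) • gammaS ℤ_[p] M L i

theorem smul_mem_tail {L : Submodule ℤ_[p] M} {k i : ℕ} (h : k ≤ i) {x : M}
    (hx : x ∈ gammaS ℤ_[p] M L i) : (((p : ℚ_[p]) ^ i)⁻¹) • x ∈ tail L k :=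
  (le_iSup₂_of_le (f := fun i (_ : i ≥ k) => (((p : ℚ_[p]) ^ i)⁻¹) • gammaS ℤ_[p] M L i)
    i h le_rfl) (Submodule.smul_mem_pointwise_smul x _ _ hx)

theorem tail_anti (L : Submodule ℤ_[p] M) {k l : ℕ} (h : k ≤ l) : tail L l ≤ tail L k :=
  biSup_mono fun _ hi => le_trans h hi

/-- Elements of `F k` are `ℤ_[p]`-combinations of the obvious generators. -/
theorem tail_eq_span (L : Submodule ℤ_[p] M) (k : ℕ) :
    tail L k = Submodule.span ℤ_[p]
      {z : M | ∃ i, k ≤ i ∧ ∃ x ∈ gammaS ℤ_[p] M L i, z = (((p : ℚ_[p]) ^ i)⁻¹) • x} := by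
  refine le_antisymm (iSup₂_le fun i hi => ?_) (Submodule.span_le.2 ?_)
  · rintro _ ⟨x, hx, rfl⟩
    exact Submodule.subset_span ⟨i, hi, x, hx, rfl⟩
  · rintro _ ⟨i, hi, x, hx, rfl⟩
    exact smul_mem_tail hi hx

/-- `⁅F k, F l⁆ ⊆ p · F (k + l + 1)`: the exponent of `p⁻¹` adds up to one less than the weight of
the bracket allows, which is where the factor `p` comes from. -/
theorem bracket_mem_tail (L : Submodule ℤ_[p] M) (k l : ℕ) {x y : M} (hx : x ∈ tail L k)
    (hy : y ∈ tail L l) : ⁅x, y⁆ ∈ (p : ℤ_[p]) • tail L (k + l + 1) := by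
  have hp : (p : ℚ_[p]) ≠ 0 := Nat.cast_ne_zero.2 (Fact.out : p.Prime).ne_zero
  rw [tail_eq_span] at hx hy
  refine lie_mem_of_span ?_ hx
  rintro _ ⟨i, hi, u, hu, rfl⟩
  refine lie_mem_comm.1 (lie_mem_of_span ?_ hy)
  rintro _ ⟨j, hj, v, hv, rfl⟩
  rw [lie_mem_comm]
  have key := Submodule.smul_mem_pointwise_smul _ (p : ℤ_[p]) _
    (smul_mem_tail (k := k + l + 1) (by omega) (bracket_mem_gammaS L j i u hu v hv))
  convert key using 1
  rw [← algebraMap_smul ℚ_[p] (p : ℤ_[p]), map_natCast, smul_lie, lie_smul, smul_smul, smul_smul]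
  congr 1
  field_simp
  ring

theorem smul_tail_le (L : Submodule ℤ_[p] M) (k : ℕ) : (p : ℤ_[p]) • tail L k ≤ tail L k := by
  rintro _ ⟨x, hx, rfl⟩
  exact Submodule.smul_mem _ (p : ℤ_[p]) hx

theorem gammaS_tail_le (L : Submodule ℤ_[p] M) (k : ℕ) :
    gammaS ℤ_[p] M (tail L 0) k ≤ tail L k := by
  induction k with
  | zero => exact le_rfl
  | succ k ih =>
    refine Submodule.span_le.2 ?_
    rintro _ ⟨x, hx, y, hy, rfl⟩
    exact smul_tail_le L _ (bracket_mem_tail L k 0 (ih hx) hy)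

theorem tail_eq_bot {L : Submodule ℤ_[p] M} {c : ℕ} (h : gammaS ℤ_[p] M L c = ⊥) :
    tail L c = ⊥ := by
  refine eq_bot_iff.2 (iSup₂_le fun i hi => ?_)
  rw [gammaS_eq_bot h hi, Submodule.smul_bot']

theorem LhatDef_eq_tail {L : Submodule ℤ_[p] M} {c : ℕ} (h : gammaS ℤ_[p] M L c = ⊥) :
    LhatDef p M L c = tail L 0 := by
  refine le_antisymm (biSup_mono fun _ _ => Nat.zero_le _) (iSup₂_le fun i _ => ?_)
  rcases lt_or_ge i c with hi | hi
  · exact le_iSup₂_of_le (f := fun i (_ : i ∈ Finset.range c) =>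
      (((p : ℚ_[p]) ^ i)⁻¹) • gammaS ℤ_[p] M L i) i (Finset.mem_range.2 hi) le_rfl
  · rw [gammaS_eq_bot h hi, Submodule.smul_bot']
    exact bot_le

theorem le_tail_zero (L : Submodule ℤ_[p] M) : L ≤ tail L 0 := fun x hx => by
  simpa using smul_mem_tail (L := L) (k := 0) (i := 0) le_rfl hx

end

/-- Let `p` be a prime, `M` a Lie algebra over `ℚ_[p]`, and `L ⊆ M` a `ℤ_[p]`-Lie subalgebra
(a `ℤ_[p]`-submodule closed under the bracket) which is nilpotent of nilpotency class exactly
`c ≥ 1` (i.e. `γ_{c+1}(L) = 0` and `γ_c(L) ≠ 0`).  Then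
`L̂ = L + p⁻¹·γ_2(L) + ⋯ + p^{-(c-1)}·γ_c(L)` is closed under the Lie bracket, is nilpotent of
nilpotency class exactly `c`, and `⁅L̂, L̂⁆ ⊆ p·L̂`, i.e. `L̂` is powerful. -/
theorem Lhat_closed_nilpotent_powerful (p : ℕ) [Fact p.Prime] (M : Type*) [LieRing M]
    [LieAlgebra ℚ_[p] M] [Module ℤ_[p] M] [IsScalarTower ℤ_[p] ℚ_[p] M]
    (L : Submodule ℤ_[p] M) (hL : ∀ x ∈ L, ∀ y ∈ L, ⁅x, y⁆ ∈ L)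
    (c : ℕ) (hc : 1 ≤ c)
    (hnil : gammaS ℤ_[p] M L c = ⊥) (hcl : gammaS ℤ_[p] M L (c - 1) ≠ ⊥) :
    (∀ x ∈ LhatDef p M L c, ∀ y ∈ LhatDef p M L c, ⁅x, y⁆ ∈ LhatDef p M L c) ∧
    gammaS ℤ_[p] M (LhatDef p M L c) c = ⊥ ∧
    gammaS ℤ_[p] M (LhatDef p M L c) (c - 1) ≠ ⊥ ∧
    (∀ x ∈ LhatDef p M L c, ∀ y ∈ LhatDef p M L c,
      ⁅x, y⁆ ∈ (p : ℤ_[p]) • LhatDef p M L c) := by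
  rw [LhatDef_eq_tail hnil]
  have hpow : ∀ x ∈ tail L 0, ∀ y ∈ tail L 0, ⁅x, y⁆ ∈ (p : ℤ_[p]) • tail L 0 :=
    fun x hx y hy => Submodule.map_mono (tail_anti L (Nat.zero_le _)) (bracket_mem_tail L 0 0 hx hy)
  refine ⟨fun x hx y hy => smul_tail_le L 0 (hpow x hx y hy), ?_, fun h => hcl ?_, hpow⟩
  · exact eq_bot_iff.2 ((gammaS_tail_le L c).trans (tail_eq_bot hnil).le)
  · exact eq_bot_iff.2 ((gammaS_mono (le_tail_zero L) (c - 1)).trans h.le)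
end

section
/- Let p be a prime and let L be a ℤ_p-Lie algebra with the Ω-extension property, i.e. there exists a p-central ℤ_p-Lie algebra A such that L is isomorphic to A/Ω₁(A). Then L is p-central: every a ∈ L with p·a = 0 satisfies ⁅a, L⁆ = 0. -/
/-- Let `p` be a prime and `L` a `ℤ_[p]`-Lie algebra with the Ω-extension property: there is a
`p`-central `ℤ_[p]`-Lie algebra `A` with `L ≅ A/Ω₁(A)`, encoded as a surjective Lie algebra
morphism `φ : A → L` whose kernel is exactly `Ω₁(A) = {a : p·a = 0}`.  Then `L` is `p`-central:
every `x ∈ L` with `p·x = 0` satisfies `⁅x, L⁆ = 0`. -/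
theorem pcentral_of_OmegaEP (p : ℕ) [Fact p.Prime] (L : Type) [LieRing L]
    [LieAlgebra ℤ_[p] L]
    (h : ∃ (A : Type) (_ : LieRing A) (_ : LieAlgebra ℤ_[p] A),
      (∀ a : A, (p : ℤ_[p]) • a = 0 → ∀ b : A, ⁅a, b⁆ = 0) ∧
      ∃ φ : A →ₗ⁅ℤ_[p]⁆ L, Function.Surjective φ ∧
        ∀ a : A, φ a = 0 ↔ (p : ℤ_[p]) • a = 0) :
    ∀ x : L, (p : ℤ_[p]) • x = 0 → ∀ y : L, ⁅x, y⁆ = 0 := by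
  obtain ⟨A, _, _, hA, φ, hφ, hker⟩ := h
  intro x hx y
  obtain ⟨a, rfl⟩ := hφ x
  obtain ⟨b, rfl⟩ := hφ y
  -- `p • a` lies in the kernel `Ω₁(A)`, hence is central in `A`, so `p • ⁅a, b⁆ = ⁅p • a, b⁆ = 0`.
  have hpa : (p : ℤ_[p]) • (p : ℤ_[p]) • a = 0 := by
    rw [← hker, map_smul, hx]
  rw [← LieHom.map_lie, hker, ← smul_lie]
  exact hA _ hpa b
end

section
/- Let p be a prime. There exist functions g : ℕ × ℕ → ℕ and f : ℕ × ℕ × ℕ → ℕ with the following property: for all positive integers c and d and every finite ℤ_p-Lie algebra L (a Lie algebra over ℤ_p whose underlying set is finite) which is generated as a Lie algebra by d elements and is nilpotent of nilpotency class at most c, there exist a finite powerful p-central ℤ_p-Lie algebra L̂ generated as a Lie algebra by at most g(c,d) elements and a Lie ideal J of L such that: (a) the cardinality of J is at most f(p,c,d); (b) there is an injective homomorphism of ℤ_p-Lie algebras φ : L/J → L̂/Ω₁(L̂); and (c) the index of the image of φ, i.e. the cardinality of L̂/Ω₁(L̂) divided by the cardinality of φ(L/J), is at most f(p,c,d). 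-/
/-!
The proof twists the Lie bracket of a free nilpotent Lie algebra by `p`.

Let `N` be the free nilpotent `ℤ_[p]`-Lie algebra of class `c` on `d` generators (a quotient of
`FreeLieAlgebra`, see `exists_free_nilpotent`), and let `N_p` be the same module with the bracket
`p • ⁅x, y⁆` (`Rescaled`). Since `N_p` is again nilpotent of class at most `c`, the universal
property gives a Lie algebra morphism `ι : N → N_p` fixing the generators (morally, `ι` is
multiplication by `p ^ (i - 1)` on the component of weight `i`). As `N` is a finitely generated
module (`fg_of_lowerCentralSeries_eq_bot`), some `p ^ k • N` lies in the range of `ι`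
(`exists_pow_smul_mem_range`), and the kernel of `ι` is killed by a power of `p`
(`exists_pow_smul_ker_eq_zero`). No torsion-freeness of `N` is needed.

Given `L = N / R`, there is an ideal `S` of `N` (for the original bracket) which contains `ι R` and
satisfies `p ^ m • S ⊆ ι R` with `m` depending only on `N` (`exists_ideal`): it is made of layers
`S_i` in the `i`-th lower central term, each bracket costing a bounded power of `p` because
`p ^ (k + 1) • ⁅n, ι r⁆ = p • ⁅ι n', ι r⁆ = ι ⁅n', r⁆` when `p ^ k • n = ι n'`.
Put `L̂ = N_p / pS`. It is powerful because the bracket of `N_p` is divisible by `p`, and `p`-central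
because `p • x ∈ pS` implies `p • ⁅x, y⁆ = ⁅p • x, y⁆ ∈ pS`. The map `ι` induces a morphism
`L → L̂ / Ω₁(L̂)`, whose kernel is taken as `J`. The image has index at most `|N / ι N|`, and `J` is
killed by a fixed power `p ^ M`, so `|J| ≤ |L / p ^ M L| ≤ |N / p ^ M N|`. Both bounds depend only
on `N`, that is, on `p`, `c` and `d`.
-/

namespace NilpotentStructure

open LieModule

section

variable {p : ℕ} [Fact p.Prime]

/-! ### Finitely generated modules over the `p`-adic integers -/

lemma finite_quotient_of_pow_smul_mem {M : Type*} [AddCommGroup M] [Module ℤ_[p] M]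
    [Module.Finite ℤ_[p] M] (S : Submodule ℤ_[p] M) (m : ℕ)
    (h : ∀ x : M, (p : ℤ_[p]) ^ m • x ∈ S) : Finite (M ⧸ S) := by
  have h1 : Finite (ℤ_[p] ⧸ Ideal.span {(p : ℤ_[p]) ^ m}) := by
    rw [← PadicInt.ker_toZModPow]
    have : NeZero (p ^ m) := ⟨pow_ne_zero _ (Fact.out : p.Prime).ne_zero⟩
    exact Finite.of_injective _ (RingHom.kerLift_injective (PadicInt.toZModPow (p := p) m))
  have h2 : Finite (M ⧸ (⊤ : Submodule ℤ_[p] M)) := inferInstance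
  have h3 := Submodule.finite_quotient_smul (Ideal.span {(p : ℤ_[p]) ^ m})
    (N := (⊤ : Submodule ℤ_[p] M)) Module.Finite.fg_top
  have hle : Ideal.span {(p : ℤ_[p]) ^ m} • (⊤ : Submodule ℤ_[p] M) ≤ S := by
    rw [Submodule.smul_le]
    intro r hr n _
    obtain ⟨a, rfl⟩ := Ideal.mem_span_singleton'.1 hr
    rw [mul_smul]
    exact S.smul_mem _ (h n)
  exact Finite.of_surjective _ (Submodule.factor_surjective hle)

lemma exists_pow_smul_eq_zero_of_finite (L : Type*) [AddCommGroup L] [Module ℤ_[p] L] [Finite L] :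
    ∃ k : ℕ, ∀ x : L, (p : ℤ_[p]) ^ k • x = 0 := by
  have hn : ((Nat.card L : ℕ) : ℤ_[p]) ≠ 0 := by
    exact_mod_cast (Nat.card_pos (α := L)).ne'
  refine ⟨((Nat.card L : ℕ) : ℤ_[p]).valuation, fun x => ?_⟩
  have h0 : ((Nat.card L : ℕ) : ℤ_[p]) • x = 0 := by
    rw [Nat.cast_smul_eq_nsmul]
    exact card_nsmul_eq_zero'
  rw [PadicInt.unitCoeff_spec hn, mul_smul] at h0
  exact (smul_eq_zero_iff_eq (PadicInt.unitCoeff hn)).1 h0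

/-- An endomorphism of a Noetherian module whose range contains `p ^ k • M` has kernel of bounded
exponent. This replaces the statement that a surjective endomorphism is injective after
inverting `p`. -/
lemma exists_pow_smul_ker_eq_zero {M : Type*} [AddCommGroup M] [Module ℤ_[p] M]
    [IsNoetherian ℤ_[p] M] (e : M →ₗ[ℤ_[p]] M) (k : ℕ)
    (h : ∀ x, ∃ y, e y = (p : ℤ_[p]) ^ k • x) :
    ∃ m : ℕ, ∀ x, e x = 0 → (p : ℤ_[p]) ^ m • x = 0 := by
  have hpow : ∀ n x, ∃ y, (e ^ n) y = (p : ℤ_[p]) ^ (k * n) • x := by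
    intro n
    induction n with
    | zero => intro x; exact ⟨x, by simp⟩
    | succ n ih =>
      intro x
      obtain ⟨y, hy⟩ := h x
      obtain ⟨z, hz⟩ := ih y
      refine ⟨z, ?_⟩
      rw [pow_succ', Module.End.mul_apply, hz, map_smul, hy, smul_smul, ← pow_add, mul_add,
        mul_one]
  obtain ⟨n, hn, hn1⟩ := ((Module.End.eventually_disjoint_ker_pow_range_pow e).and
    (Filter.eventually_ge_atTop 1)).exists
  refine ⟨k * n, fun x hx => ?_⟩
  obtain ⟨y, hy⟩ := hpow n x
  refine Submodule.disjoint_def.1 hn _ ?_ ⟨y, hy⟩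
  obtain ⟨n, rfl⟩ := Nat.exists_eq_add_of_le' hn1
  simp [pow_succ, hx]

/-- A submodule killed by `p ^ m` of a finite quotient `L` of `M` has at most `|M / p ^ m M|`
elements, because `|L[p ^ m]| = |L / p ^ m L|`. -/
lemma card_le_of_pow_smul_eq_zero {M L : Type*} [AddCommGroup M] [Module ℤ_[p] M]
    [Module.Finite ℤ_[p] M] [AddCommGroup L] [Module ℤ_[p] L] [Finite L]
    (f : M →ₗ[ℤ_[p]] L) (hf : Function.Surjective f) (J : Submodule ℤ_[p] L) (m : ℕ)
    (hJ : ∀ x ∈ J, (p : ℤ_[p]) ^ m • x = 0) :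
    Nat.card J ≤ Nat.card (M ⧸ LinearMap.range (LinearMap.lsmul ℤ_[p] M ((p : ℤ_[p]) ^ m))) := by
  set φ := LinearMap.lsmul ℤ_[p] L ((p : ℤ_[p]) ^ m)
  set ψ := LinearMap.lsmul ℤ_[p] M ((p : ℤ_[p]) ^ m)
  have h1 : Nat.card J ≤ Nat.card (LinearMap.ker φ) :=
    Nat.card_le_card_of_injective _ (Submodule.inclusion_injective
      (fun x hx => by simpa [φ] using hJ x hx : J ≤ LinearMap.ker φ))
  have h2 := Submodule.card_eq_card_quotient_mul_card (LinearMap.range φ)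
  have h3 := Submodule.card_eq_card_quotient_mul_card (LinearMap.ker φ)
  have h4 : Nat.card (L ⧸ LinearMap.ker φ) = Nat.card (LinearMap.range φ) :=
    Nat.card_congr φ.quotKerEquivRange.toEquiv
  have h5 : Nat.card (LinearMap.ker φ) = Nat.card (L ⧸ LinearMap.range φ) := by
    have hpos : 0 < Nat.card (LinearMap.range φ) := Nat.card_pos
    rw [h4] at h3
    nlinarith [h2, h3]
  have : Finite (M ⧸ LinearMap.range ψ) :=
    finite_quotient_of_pow_smul_mem _ m fun x => ⟨x, rfl⟩
  have hle : LinearMap.range ψ ≤ (LinearMap.range φ).comap f := by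
    rintro _ ⟨x, rfl⟩
    exact ⟨f x, by simp [φ, ψ]⟩
  have h6 : Nat.card (L ⧸ LinearMap.range φ) ≤ Nat.card (M ⧸ LinearMap.range ψ) := by
    refine Nat.card_le_card_of_surjective (Submodule.mapQ _ _ f hle) ?_
    intro y
    obtain ⟨y, rfl⟩ := Submodule.Quotient.mk_surjective _ y
    obtain ⟨x, rfl⟩ := hf y
    exact ⟨Submodule.Quotient.mk x, rfl⟩
  omega

/-! ### Generation and nilpotency of Lie algebras -/

section General

variable {R : Type*} [CommRing R]

/-- A Lie algebra morphism descends along a surjective one whose kernel it kills. -/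
lemma exists_lift {A B C : Type*} [LieRing A] [LieAlgebra R A] [LieRing B] [LieAlgebra R B]
    [LieRing C] [LieAlgebra R C] (f : A →ₗ⁅R⁆ B) (hf : Function.Surjective f) (g : A →ₗ⁅R⁆ C)
    (h : ∀ x, f x = 0 → g x = 0) : ∃ k : B →ₗ⁅R⁆ C, ∀ x, k (f x) = g x := by
  have key : ∀ x y, f x = f y → g x = g y := fun x y hxy => by
    rw [← sub_eq_zero, ← map_sub]
    exact h _ (by rw [map_sub, hxy, sub_self])
  have hs := Function.surjInv_eq hf
  refine ⟨{ toFun := fun b => g (Function.surjInv hf b)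
            map_add' := fun a b => ?_
            map_smul' := fun r b => ?_
            map_lie' := fun {a b} => ?_ }, fun x => key _ _ (hs _)⟩
  · rw [← map_add]; exact key _ _ (by simp [hs])
  · rw [RingHom.id_apply, ← map_smul]; exact key _ _ (by simp [hs])
  · rw [← LieHom.map_lie]; exact key _ _ (by simp [hs])

/-- The projection onto the quotient by a Lie ideal, as a morphism of Lie algebras. -/
def mkHom {A : Type*} [LieRing A] [LieAlgebra R A] (I : LieIdeal R A) : A →ₗ⁅R⁆ A ⧸ I where
  toFun := LieSubmodule.Quotient.mk
  map_add' _ _ := rfl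
  map_smul' _ _ := rfl
  map_lie' := rfl

lemma mkHom_surjective {A : Type*} [LieRing A] [LieAlgebra R A] (I : LieIdeal R A) :
    Function.Surjective (mkHom I) := Quot.mk_surjective

lemma mkHom_eq_zero {A : Type*} [LieRing A] [LieAlgebra R A] (I : LieIdeal R A) (x : A) :
    mkHom I x = 0 ↔ x ∈ I := LieSubmodule.Quotient.mk_eq_zero'

lemma surjective_of_lieSpan_eq_top {A B : Type*} [LieRing A] [LieAlgebra R A] [LieRing B]
    [LieAlgebra R B] (f : A →ₗ⁅R⁆ B) (s : Set B) (hs : LieSubalgebra.lieSpan R B s = ⊤)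
    (h : ∀ b ∈ s, ∃ a, f a = b) : Function.Surjective f := by
  rw [← LieHom.range_eq_top, eq_top_iff, ← hs, LieSubalgebra.lieSpan_le]
  intro b hb
  exact (LieHom.mem_range f b).2 (h b hb)

lemma lieSpan_range_of (X : Type*) :
    LieSubalgebra.lieSpan R (FreeLieAlgebra R X) (Set.range (FreeLieAlgebra.of R)) = ⊤ := by
  set K := LieSubalgebra.lieSpan R (FreeLieAlgebra R X) (Set.range (FreeLieAlgebra.of R))
  let f : FreeLieAlgebra R X →ₗ⁅R⁆ K := FreeLieAlgebra.lift R fun x =>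
    ⟨FreeLieAlgebra.of R x, LieSubalgebra.subset_lieSpan ⟨x, rfl⟩⟩
  have hf : K.incl.comp f = LieHom.id := by
    apply FreeLieAlgebra.hom_ext
    intro x
    simp [f]
  rw [eq_top_iff]
  intro x _
  have := congrArg (fun g => g x) hf
  simp only [LieHom.comp_apply, LieHom.id_apply] at this
  rw [← this]
  exact (f x).2

/-- The free nilpotent Lie algebra of class `c` on `d` generators. -/
lemma exists_free_nilpotent (R : Type) [CommRing R] (c d : ℕ) :
    ∃ (N : Type) (_ : LieRing N) (_ : LieAlgebra R N) (x : Fin d → N),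
      LieSubalgebra.lieSpan R N (Set.range x) = ⊤ ∧ lowerCentralSeries R N N c = ⊥ ∧
      ∀ (L : Type) [LieRing L] [LieAlgebra R L] (y : Fin d → L),
        lowerCentralSeries R L L c = ⊥ → ∃ f : N →ₗ⁅R⁆ L, ∀ i, f (x i) = y i := by
  let F := FreeLieAlgebra R (Fin d)
  let I : LieIdeal R F := lowerCentralSeries R F F c
  refine ⟨F ⧸ I, inferInstance, inferInstance, fun i => mkHom I (FreeLieAlgebra.of R i),
    ?_, ?_, ?_⟩
  · have h := LieSubalgebra.map_lieSpan (R := R) (L := F) (mkHom I)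
      (s := Set.range (FreeLieAlgebra.of R))
    rw [lieSpan_range_of, ← Set.range_comp] at h
    rw [show (fun i => mkHom I (FreeLieAlgebra.of R i)) = mkHom I ∘ FreeLieAlgebra.of R from rfl,
      ← h, eq_top_iff]
    intro x _
    obtain ⟨a, rfl⟩ := mkHom_surjective I x
    exact ⟨a, trivial, rfl⟩
  · rw [← LieIdeal.lowerCentralSeries_map_eq c (mkHom_surjective I), LieIdeal.map_eq_bot_iff]
    intro x hx
    rw [LieHom.mem_ker, mkHom_eq_zero]
    exact hx
  · intro L _ _ y hL
    obtain ⟨k, hk⟩ := exists_lift (mkHom I) (mkHom_surjective I) (FreeLieAlgebra.lift R y) (by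
      intro x hx
      rw [mkHom_eq_zero] at hx
      have h1 := LieIdeal.map_lowerCentralSeries_le c (f := FreeLieAlgebra.lift R y)
      rw [hL] at h1
      simpa using h1 (LieIdeal.mem_map hx))
    exact ⟨k, fun i => by rw [hk]; exact FreeLieAlgebra.lift_of_apply y i⟩

variable {N : Type*} [LieRing N] [LieAlgebra R N]

variable (R N) in
/-- The Lie bracket as a bilinear map. -/
def bracketBilin : N →ₗ[R] N →ₗ[R] N :=
  LinearMap.mk₂ R (fun x y => ⁅x, y⁆) add_lie smul_lie lie_add fun r x y => lie_smul r x y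

/-- A finitely generated nilpotent Lie algebra is a finitely generated module: it is spanned by the
left-normed brackets of generators. -/
lemma fg_of_lowerCentralSeries_eq_bot (s : Set N) (hs : s.Finite)
    (hspan : LieSubalgebra.lieSpan R N s = ⊤) (c : ℕ) (hc : lowerCentralSeries R N N c = ⊥) :
    Module.Finite R N := by
  let T : ℕ → Submodule R N := fun n => Nat.rec (Submodule.span R s)
    (fun _ P => Submodule.map₂ (bracketBilin R N) (Submodule.span R s) P) n
  have hT : ∀ n, T (n + 1) =
    Submodule.map₂ (bracketBilin R N) (Submodule.span R s) (T n) := fun _ => rfl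
  have hfg0 : (Submodule.span R s).FG := Submodule.fg_span hs
  have hfg : ∀ n, (T n).FG := by
    intro n
    induction n with
    | zero => exact hfg0
    | succ n ih => rw [hT]; exact hfg0.map₂ _ ih
  have hlcs : ∀ n, T n ≤ (lowerCentralSeries R N N n).toSubmodule := by
    intro n
    induction n with
    | zero => intro x _; simp
    | succ n ih =>
      rw [hT, Submodule.map₂_le]
      intro a _ b hb
      rw [LieModule.lowerCentralSeries_succ]
      exact LieSubmodule.lie_mem_lie (LieSubmodule.mem_top _) (ih hb)
  let U : Submodule R N := ⨆ i : Fin c, T i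
  have hTU : ∀ n, T n ≤ U := by
    intro n
    by_cases h : n < c
    · exact le_iSup (fun i : Fin c => T i) ⟨n, h⟩
    · intro x hx
      have := antitone_lowerCentralSeries R N N (not_lt.1 h) (hlcs n hx)
      rw [hc, LieSubmodule.mem_bot] at this
      rw [this]
      exact U.zero_mem
  -- The elements normalising `U` form a subalgebra containing the generators.
  let K : LieSubalgebra R N :=
    { carrier := {x | ∀ u ∈ U, ⁅x, u⁆ ∈ U}
      add_mem' := fun {a b} ha hb u hu => by rw [add_lie]; exact U.add_mem (ha u hu) (hb u hu)
      zero_mem' := fun u _ => by rw [zero_lie]; exact U.zero_mem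
      smul_mem' := fun r a ha u hu => by rw [smul_lie]; exact U.smul_mem _ (ha u hu)
      lie_mem' := fun {a b} ha hb u hu => by
        rw [lie_lie]
        exact U.sub_mem (ha _ (hb u hu)) (hb _ (ha u hu)) }
  have hK : K = ⊤ := by
    rw [eq_top_iff, ← hspan, LieSubalgebra.lieSpan_le]
    intro x hx u hu
    have : U ≤ U.comap (bracketBilin R N x) := by
      refine iSup_le fun i a ha => ?_
      apply hTU (i + 1)
      rw [hT]
      exact Submodule.apply_mem_map₂ _ (Submodule.subset_span hx) ha
    exact this hu
  let K' : LieSubalgebra R N :=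
    { U with
      lie_mem' := fun {a b} _ hb => by
        have : a ∈ K := by rw [hK]; trivial
        exact this b hb }
  have hK' : K' = ⊤ := by
    rw [eq_top_iff, ← hspan, LieSubalgebra.lieSpan_le]
    intro x hx
    exact hTU 0 (Submodule.subset_span hx)
  have hU : U = ⊤ := by
    rw [eq_top_iff]
    intro x _
    have : x ∈ K' := by rw [hK']; trivial
    exact this
  exact ⟨hU ▸ Submodule.fg_iSup _ fun i => hfg _⟩

end General

/-! ### The rescaled Lie algebra -/

/-- The Lie algebra `N` with its bracket multiplied by `p`. -/
def Rescaled (_p : ℕ) (N : Type) : Type := N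

section Rescaled

variable {N : Type} [LieRing N] [LieAlgebra ℤ_[p] N]

instance : AddCommGroup (Rescaled p N) := inferInstanceAs (AddCommGroup N)

noncomputable instance : Module ℤ_[p] (Rescaled p N) := inferInstanceAs (Module ℤ_[p] N)

variable (p N) in
/-- The identity map from `N` to `Rescaled p N`, as a linear equivalence. -/
noncomputable def resc : N ≃ₗ[ℤ_[p]] Rescaled p N := LinearEquiv.refl _ _

noncomputable instance : LieRing (Rescaled p N) where
  bracket x y := resc p N ((p : ℤ_[p]) • ⁅(resc p N).symm x, (resc p N).symm y⁆)
  add_lie x y z := by simp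
  lie_add x y z := by simp
  lie_self x := by simp
  leibniz_lie x y z := by simp [← smul_add]

lemma rescaled_lie (x y : Rescaled p N) :
    ⁅x, y⁆ = resc p N ((p : ℤ_[p]) • ⁅(resc p N).symm x, (resc p N).symm y⁆) := rfl

noncomputable instance : LieAlgebra ℤ_[p] (Rescaled p N) where
  lie_smul t x y := by simp [rescaled_lie, smul_comm t]

/-- An ideal of `N` is an ideal of `Rescaled p N`. -/
noncomputable def rescIdeal (I : LieIdeal ℤ_[p] N) : LieIdeal ℤ_[p] (Rescaled p N) where
  toSubmodule := I.toSubmodule.comap (resc p N).symm.toLinearMap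
  lie_mem {x m} hm := by
    have h : ⁅(resc p N).symm x, (resc p N).symm m⁆ ∈ I := lie_mem_right _ _ I _ _ hm
    change (resc p N).symm ⁅x, m⁆ ∈ I
    rw [rescaled_lie, LinearEquiv.symm_apply_apply]
    exact I.smul_mem _ h

lemma mem_rescIdeal (I : LieIdeal ℤ_[p] N) (x : Rescaled p N) :
    x ∈ rescIdeal I ↔ (resc p N).symm x ∈ I := Iff.rfl

lemma rescaled_lowerCentralSeries_le (i : ℕ) :
    lowerCentralSeries ℤ_[p] (Rescaled p N) (Rescaled p N) i ≤
      rescIdeal (lowerCentralSeries ℤ_[p] N N i) := by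
  induction i with
  | zero => intro x _; rw [mem_rescIdeal]; simp
  | succ i ih =>
    rw [LieModule.lowerCentralSeries_succ, LieSubmodule.lie_le_iff]
    intro x _ y hy
    rw [mem_rescIdeal, rescaled_lie, LinearEquiv.symm_apply_apply, LieModule.lowerCentralSeries_succ]
    exact Submodule.smul_mem _ _ (LieSubmodule.lie_mem_lie (LieSubmodule.mem_top _) (ih hy))

lemma rescaled_lowerCentralSeries_eq_bot (c : ℕ) (h : lowerCentralSeries ℤ_[p] N N c = ⊥) :
    lowerCentralSeries ℤ_[p] (Rescaled p N) (Rescaled p N) c = ⊥ := by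
  rw [eq_bot_iff]
  intro x hx
  have := rescaled_lowerCentralSeries_le c hx
  rw [mem_rescIdeal, h, LieSubmodule.mem_bot] at this
  simpa using this

/-- The multiples `p • s` of the elements of an ideal `S`, as an ideal. -/
noncomputable def pIdeal (S : LieIdeal ℤ_[p] N) : LieIdeal ℤ_[p] N where
  toSubmodule := S.toSubmodule.map (LinearMap.lsmul ℤ_[p] N (p : ℤ_[p]))
  lie_mem {x m} hm := by
    obtain ⟨s, hs, rfl⟩ := hm
    exact ⟨⁅x, s⁆, lie_mem_right _ _ S _ _ hs, by simp⟩

lemma mem_pIdeal (S : LieIdeal ℤ_[p] N) (x : N) :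
    x ∈ pIdeal S ↔ ∃ s ∈ S, (p : ℤ_[p]) • s = x := Iff.rfl

variable (p N) in
/-- The annihilator of `p`, as a Lie ideal. It agrees with `Ω₁(N)`, and it is an ideal whether or
not `N` is `p`-central. -/
noncomputable def omegaOne : LieIdeal ℤ_[p] N where
  toSubmodule := LinearMap.ker (LinearMap.lsmul ℤ_[p] N (p : ℤ_[p]))
  lie_mem {x m} hm := by
    have h : (p : ℤ_[p]) • m = 0 := hm
    change (p : ℤ_[p]) • ⁅x, m⁆ = 0
    rw [← lie_smul, h, lie_zero]

lemma mem_omegaOne (x : N) : x ∈ omegaOne p N ↔ (p : ℤ_[p]) • x = 0 := Iff.rfl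

/-- Elements of `N` some `p`-power multiple of which lies in the range of `e` form a Lie
subalgebra, so they exhaust `N` as soon as this subalgebra contains the generators. -/
lemma exists_pow_smul_mem_range [Module.Finite ℤ_[p] N] (e : N →ₗ[ℤ_[p]] N)
    (he : ∀ x y : N, e ⁅x, y⁆ = (p : ℤ_[p]) • ⁅e x, e y⁆) (s : Set N)
    (hspan : LieSubalgebra.lieSpan ℤ_[p] N s = ⊤) (hs : ∀ x ∈ s, e x = x) :
    ∃ k : ℕ, ∀ x, ∃ y, e y = (p : ℤ_[p]) ^ k • x := by
  let K : LieSubalgebra ℤ_[p] N :=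
    { carrier := {x | ∃ k : ℕ, ∃ y, e y = (p : ℤ_[p]) ^ k • x}
      zero_mem' := ⟨0, 0, by simp⟩
      add_mem' := by
        rintro a b ⟨k, y, hy⟩ ⟨l, z, hz⟩
        refine ⟨k + l, (p : ℤ_[p]) ^ l • y + (p : ℤ_[p]) ^ k • z, ?_⟩
        rw [map_add, map_smul, map_smul, hy, hz, smul_add, smul_smul, smul_smul, ← pow_add,
          ← pow_add, add_comm l k]
      smul_mem' := by
        rintro r a ⟨k, y, hy⟩
        exact ⟨k, r • y, by rw [map_smul, hy, smul_comm]⟩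
      lie_mem' := by
        rintro a b ⟨k, y, hy⟩ ⟨l, z, hz⟩
        refine ⟨1 + k + l, ⁅y, z⁆, ?_⟩
        rw [he, hy, hz, smul_lie, lie_smul, smul_smul, smul_smul, pow_add, pow_add, pow_one] }
  have hK : K = ⊤ := by
    rw [eq_top_iff, ← hspan, LieSubalgebra.lieSpan_le]
    intro x hx
    exact ⟨0, x, by rw [hs x hx, pow_zero, one_smul]⟩
  have hK' : ∀ x, ∃ k : ℕ, ∃ y, e y = (p : ℤ_[p]) ^ k • x := by
    intro x
    have : x ∈ K := by rw [hK]; trivial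
    exact this
  obtain ⟨t, ht⟩ := (Module.Finite.fg_top : (⊤ : Submodule ℤ_[p] N).FG)
  choose k y hy using hK'
  refine ⟨t.sup k, fun x => ?_⟩
  have : (⊤ : Submodule ℤ_[p] N) ≤ (LinearMap.range e).comap
      (LinearMap.lsmul ℤ_[p] N ((p : ℤ_[p]) ^ t.sup k)) := by
    rw [← ht, Submodule.span_le]
    intro x hx
    obtain ⟨j, hj⟩ := Nat.exists_eq_add_of_le' (Finset.le_sup (f := k) hx)
    refine ⟨(p : ℤ_[p]) ^ j • y x, ?_⟩
    rw [map_smul, hy, smul_smul, ← pow_add, ← hj]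
    rfl
  exact this (Submodule.mem_top (x := x))

/-- The ideal generated by `e R` exceeds `e R` only by a power of `p` that does not depend
on `R`. The ideal constructed here is the sum of the submodules `W i` of those
`y` in the `i`-th lower central term with `p ^ ((k + 1) * i) • y ∈ e R`; bracketing with `N` sends
`W i` to `W (i + 1)`. -/
lemma exists_ideal (e : N →ₗ[ℤ_[p]] N) (he : ∀ x y : N, e ⁅x, y⁆ = (p : ℤ_[p]) • ⁅e x, e y⁆)
    (k : ℕ) (hk : ∀ x, ∃ y, e y = (p : ℤ_[p]) ^ k • x) (c : ℕ)
    (hc : lowerCentralSeries ℤ_[p] N N c = ⊥) (R : LieIdeal ℤ_[p] N) :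
    ∃ S : LieIdeal ℤ_[p] N, (∀ x ∈ R, e x ∈ S) ∧
      ∀ s ∈ S, ∃ r ∈ R, e r = (p : ℤ_[p]) ^ ((k + 1) * c) • s := by
  let W : ℕ → Submodule ℤ_[p] N := fun i => (lowerCentralSeries ℤ_[p] N N i).toSubmodule ⊓
    (R.toSubmodule.map e).comap (LinearMap.lsmul ℤ_[p] N ((p : ℤ_[p]) ^ ((k + 1) * i)))
  have hW : ∀ i x, x ∈ W i ↔ x ∈ lowerCentralSeries ℤ_[p] N N i ∧
      ∃ r ∈ R, e r = (p : ℤ_[p]) ^ ((k + 1) * i) • x := fun i x => Iff.rfl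
  have hstep : ∀ (n : N) (i : ℕ) (x : N), x ∈ W i → ⁅n, x⁆ ∈ W (i + 1) := by
    intro n i x hx
    obtain ⟨h1, r, hr, h2⟩ := (hW i x).1 hx
    rw [hW]
    constructor
    · rw [LieModule.lowerCentralSeries_succ]
      exact LieSubmodule.lie_mem_lie (LieSubmodule.mem_top _) h1
    · obtain ⟨n', hn'⟩ := hk n
      refine ⟨⁅n', r⁆, lie_mem_right _ _ R _ _ hr, ?_⟩
      rw [he, hn', h2, smul_lie, lie_smul, smul_smul, smul_smul]
      congr 1
      ring
  let S : LieIdeal ℤ_[p] N :=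
    { (⨆ i, W i) with
      lie_mem := fun {n m} hm => by
        have : (⨆ i, W i) ≤ (⨆ i, W i).comap (bracketBilin ℤ_[p] N n) :=
          iSup_le fun i a ha => le_iSup W (i + 1) (hstep n i a ha)
        exact this hm }
  refine ⟨S, fun x hx => ?_, fun s hs => ?_⟩
  · refine le_iSup W 0 ((hW 0 _).2 ⟨by simp, x, hx, by simp⟩)
  · have : (⨆ i, W i) ≤ (R.toSubmodule.map e).comap
        (LinearMap.lsmul ℤ_[p] N ((p : ℤ_[p]) ^ ((k + 1) * c))) := by
      refine iSup_le fun i a ha => ?_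
      obtain ⟨h1, r, hr, h2⟩ := (hW i a).1 ha
      by_cases hi : i ≤ c
      · obtain ⟨j, rfl⟩ := Nat.exists_eq_add_of_le' hi
        refine ⟨(p : ℤ_[p]) ^ ((k + 1) * j) • r, R.smul_mem _ hr, ?_⟩
        rw [map_smul, h2, smul_smul, ← pow_add, ← mul_add]
        rfl
      · have := antitone_lowerCentralSeries ℤ_[p] N N (not_le.1 hi).le h1
        rw [hc, LieSubmodule.mem_bot] at this
        rw [this]
        exact Submodule.zero_mem _
    exact this hs

end Rescaled

/-! ### The structure theorem for fixed class and number of generators -/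

lemma structure_of_fixed (p : ℕ) [Fact p.Prime] (c d : ℕ) : ∃ G K : ℕ,
    ∀ (L : Type) [LieRing L] [LieAlgebra ℤ_[p] L] [Finite L],
      (∃ X : Finset L, X.card = d ∧ LieSubalgebra.lieSpan ℤ_[p] L (X : Set L) = ⊤) →
      LieModule.lowerCentralSeries ℤ_[p] L L c = ⊥ →
      ∃ (Lh : Type) (_ : LieRing Lh) (_ : LieAlgebra ℤ_[p] Lh),
        Finite Lh ∧
        (∀ a b : Lh, ∃ y : Lh, ⁅a, b⁆ = (p : ℤ_[p]) • y) ∧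
        (∀ a : Lh, (p : ℤ_[p]) • a = 0 → ∀ b : Lh, ⁅a, b⁆ = 0) ∧
        (∃ Y : Finset Lh, Y.card ≤ G ∧
          LieSubalgebra.lieSpan ℤ_[p] Lh (Y : Set Lh) = ⊤) ∧
        ∃ J : LieIdeal ℤ_[p] L, Nat.card J ≤ K ∧
          ∃ Om : LieIdeal ℤ_[p] Lh, (∀ a : Lh, a ∈ Om ↔ (p : ℤ_[p]) • a = 0) ∧
            ∃ φ : (L ⧸ J) →ₗ⁅ℤ_[p]⁆ (Lh ⧸ Om),
              Function.Injective φ ∧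
              Nat.card (Lh ⧸ Om) ≤ K * Nat.card (L ⧸ J) := by
  classical
  obtain ⟨N, _, _, x, hspan, hNc, huniv⟩ := exists_free_nilpotent ℤ_[p] c d
  have hfin : Module.Finite ℤ_[p] N :=
    fg_of_lowerCentralSeries_eq_bot _ (Set.finite_range x) hspan c hNc
  obtain ⟨ι, hι⟩ := huniv (Rescaled p N) (fun i => resc p N (x i))
    (rescaled_lowerCentralSeries_eq_bot c hNc)
  let e : N →ₗ[ℤ_[p]] N := (resc p N).symm.toLinearMap ∘ₗ (ι : N →ₗ[ℤ_[p]] Rescaled p N)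
  have hιe : ∀ y, ι y = resc p N (e y) := fun y => rfl
  have he : ∀ a b : N, e ⁅a, b⁆ = (p : ℤ_[p]) • ⁅e a, e b⁆ := by
    intro a b
    apply (resc p N).injective
    rw [← hιe, LieHom.map_lie, rescaled_lie]
    rfl
  obtain ⟨k, hk⟩ := exists_pow_smul_mem_range e he (Set.range x) hspan (by
    rintro _ ⟨i, rfl⟩
    apply (resc p N).injective
    rw [← hιe, hι])
  obtain ⟨m, hm⟩ := exists_pow_smul_ker_eq_zero e k hk
  have hfinQ : Finite (N ⧸ LinearMap.range e) := finite_quotient_of_pow_smul_mem _ k hk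
  obtain ⟨t, ht⟩ := (Module.Finite.fg_top : (⊤ : Submodule ℤ_[p] N).FG)
  let q := m + (k + 1) * c
  let K₁ := Nat.card (N ⧸ LinearMap.range e)
  let K₂ := Nat.card (N ⧸ LinearMap.range (LinearMap.lsmul ℤ_[p] N ((p : ℤ_[p]) ^ (q + 1))))
  refine ⟨t.card, K₁ + K₂, ?_⟩
  rintro L _ _ _ ⟨X, hXd, hX⟩ hLc
  obtain ⟨π, hπ⟩ := huniv L (fun i => (X.equivFinOfCardEq hXd).symm i) hLc
  have hπs : Function.Surjective π := by
    refine surjective_of_lieSpan_eq_top π _ hX fun b hb => ?_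
    exact ⟨x (X.equivFinOfCardEq hXd ⟨b, hb⟩), by rw [hπ, Equiv.symm_apply_apply]⟩
  obtain ⟨S, hS1, hS2⟩ := exists_ideal e he k hk c hNc π.ker
  let I : LieIdeal ℤ_[p] (Rescaled p N) := rescIdeal (pIdeal S)
  let μ : N →ₗ[ℤ_[p]] (Rescaled p N ⧸ I) :=
    (mkHom I : Rescaled p N →ₗ[ℤ_[p]] _) ∘ₗ (resc p N).toLinearMap
  have hμs : Function.Surjective μ := (mkHom_surjective I).comp (resc p N).surjective
  have hμ0 : ∀ y, μ y = 0 ↔ y ∈ pIdeal S := fun y => mkHom_eq_zero I _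
  have hμlie : ∀ a b, ⁅μ a, μ b⁆ = (p : ℤ_[p]) • μ ⁅a, b⁆ := by
    intro a b
    rw [← map_smul]
    exact (LieHom.map_lie (mkHom I) _ _).symm
  let Om := omegaOne p (Rescaled p N ⧸ I)
  let ψ : N →ₗ⁅ℤ_[p]⁆ ((Rescaled p N ⧸ I) ⧸ Om) := ((mkHom Om).comp (mkHom I)).comp ι
  have hψ : ∀ y, ψ y = mkHom Om (μ (e y)) := fun y => rfl
  have hψ0 : ∀ y, ψ y = 0 ↔ (p : ℤ_[p]) • e y ∈ pIdeal S := by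
    intro y
    rw [hψ, mkHom_eq_zero, mem_omegaOne, ← map_smul, hμ0]
  obtain ⟨φ₀, hφ₀⟩ := exists_lift π hπs ψ (by
    intro y hy
    rw [hψ0]
    exact ⟨e y, hS1 y ((LieHom.mem_ker (f := π)).2 hy), rfl⟩)
  obtain ⟨φ, hφ⟩ := exists_lift (mkHom φ₀.ker) (mkHom_surjective _) φ₀ (by
    intro y hy
    rwa [mkHom_eq_zero, LieHom.mem_ker] at hy)
  have hfinLh : Finite (Rescaled p N ⧸ I) := by
    obtain ⟨k', hk'⟩ := exists_pow_smul_eq_zero_of_finite (p := p) L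
    have : Finite (N ⧸ LinearMap.ker μ) := by
      refine finite_quotient_of_pow_smul_mem _ (1 + k' + k) fun y => ?_
      rw [LinearMap.mem_ker, hμ0, mem_pIdeal]
      obtain ⟨z, hz⟩ := hk y
      refine ⟨_, hS1 ((p : ℤ_[p]) ^ k' • z) ?_, ?_⟩
      · rw [LieHom.mem_ker, map_smul, hk']
      · rw [map_smul, hz, smul_smul, smul_smul, pow_add, pow_add, pow_one]
    exact Finite.of_equiv _ (μ.quotKerEquivOfSurjective hμs).toEquiv
  have hφinj : Function.Injective φ := by
    rw [injective_iff_map_eq_zero]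
    intro y hy
    obtain ⟨l, rfl⟩ := mkHom_surjective _ y
    rw [hφ] at hy
    rwa [mkHom_eq_zero, LieHom.mem_ker]
  refine ⟨Rescaled p N ⧸ I, inferInstance, inferInstance, hfinLh, ?_, ?_, ?_, φ₀.ker, ?_, Om,
    fun a => Iff.rfl, φ, hφinj, ?_⟩
  · intro a b
    obtain ⟨a, rfl⟩ := hμs a
    obtain ⟨b, rfl⟩ := hμs b
    exact ⟨_, hμlie a b⟩
  · intro a ha b
    obtain ⟨a, rfl⟩ := hμs a
    obtain ⟨b, rfl⟩ := hμs b
    rw [← map_smul, hμ0] at ha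
    rw [hμlie, ← map_smul, hμ0, ← smul_lie]
    exact lie_mem_left _ _ _ _ _ ha
  · refine ⟨t.image μ, Finset.card_image_le, ?_⟩
    rw [eq_top_iff]
    intro y _
    obtain ⟨y, rfl⟩ := hμs y
    apply LieSubalgebra.submodule_span_le_lieSpan
    rw [Finset.coe_image, ← Submodule.map_span, ht]
    exact ⟨y, trivial, rfl⟩
  · refine le_trans (card_le_of_pow_smul_eq_zero (π : N →ₗ[ℤ_[p]] L) hπs
      φ₀.ker.toSubmodule (q + 1) ?_) (Nat.le_add_left _ _)
    intro l hl
    obtain ⟨y, rfl⟩ := hπs l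
    have hl' : φ₀ (π y) = 0 := (LieHom.mem_ker (f := φ₀)).1 hl
    rw [hφ₀, hψ0, mem_pIdeal] at hl'
    obtain ⟨s, hs, hsy⟩ := hl'
    obtain ⟨r, hr, hrs⟩ := hS2 s hs
    -- `p ^ ((k + 1) * c + 1) • y` differs from the element `p • r` of `R` by an element of `ker ι`.
    have h1 : e ((p : ℤ_[p]) ^ ((k + 1) * c + 1) • y - (p : ℤ_[p]) • r) = 0 := by
      rw [map_sub, map_smul, map_smul, hrs, pow_succ, mul_smul, ← hsy, smul_comm, sub_self]
    have h2 := congrArg π (hm _ h1)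
    rw [LieHom.mem_ker] at hr
    rw [map_zero, map_smul, map_sub, map_smul, map_smul, hr, smul_zero, sub_zero, smul_smul,
      ← pow_add] at h2
    exact h2
  · let φl : (L ⧸ φ₀.ker) →ₗ[ℤ_[p]] ((Rescaled p N ⧸ I) ⧸ Om) := φ
    have h1 := Submodule.card_eq_card_quotient_mul_card (LinearMap.range φl)
    have h2 : Nat.card (LinearMap.range φl) = Nat.card (L ⧸ φ₀.ker) :=
      (Nat.card_congr (LinearEquiv.ofInjective φl hφinj).toEquiv).symm
    let ν : N →ₗ[ℤ_[p]] ((Rescaled p N ⧸ I) ⧸ Om) := (mkHom Om : _ →ₗ[ℤ_[p]] _) ∘ₗ μ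
    have hν : Function.Surjective ν := (mkHom_surjective Om).comp hμs
    have hle : LinearMap.range e ≤ (LinearMap.range φl).comap ν := by
      rintro _ ⟨y, rfl⟩
      refine ⟨mkHom _ (π y), ?_⟩
      change φ (mkHom _ (π y)) = _
      rw [hφ, hφ₀, hψ]
      rfl
    have h3 : Nat.card (((Rescaled p N ⧸ I) ⧸ Om) ⧸ LinearMap.range φl) ≤ K₁ := by
      refine Nat.card_le_card_of_surjective (Submodule.mapQ _ _ ν hle) ?_
      intro z
      obtain ⟨z, rfl⟩ := Submodule.Quotient.mk_surjective _ z
      obtain ⟨y, rfl⟩ := hν z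
      exact ⟨Submodule.Quotient.mk y, rfl⟩
    rw [h2] at h1
    have h4 : Nat.card ((Rescaled p N ⧸ I) ⧸ Om) ≤ K₁ * Nat.card (L ⧸ φ₀.ker) := by
      rw [h1]
      exact (mul_comm _ _).trans_le (Nat.mul_le_mul_right _ h3)
    exact h4.trans (Nat.mul_le_mul_right _ (Nat.le_add_right _ _))

end

end NilpotentStructure


/-- Structure theorem for finite nilpotent `ℤ_[p]`-Lie algebras.  There are functions
`g : ℕ × ℕ → ℕ` and `f : ℕ × ℕ × ℕ → ℕ` such that for all `c, d ≥ 1` and every finite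
`ℤ_[p]`-Lie algebra `L` generated by `d` elements and nilpotent of class at most `c`
(`γ_{c+1}(L) = 0`), there exist a finite powerful `p`-central `ℤ_[p]`-Lie algebra `L̂` generated
by at most `g (c, d)` elements and a Lie ideal `J` of `L` such that (a) `|J| ≤ f (p, c, d)`;
(b) there is an injective morphism of `ℤ_[p]`-Lie algebras `φ : L/J → L̂/Ω₁(L̂)`; and (c) the
index of the image of `φ` is at most `f (p, c, d)`, i.e.
`|L̂/Ω₁(L̂)| ≤ f (p, c, d) * |L/J|`. -/
theorem finite_nilpotent_LieAlgebra_structure (p : ℕ) [Fact p.Prime] :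
    ∃ (g : ℕ × ℕ → ℕ) (f : ℕ × ℕ × ℕ → ℕ),
      ∀ (c d : ℕ), 1 ≤ c → 1 ≤ d →
      ∀ (L : Type) [LieRing L] [LieAlgebra ℤ_[p] L] [Finite L],
        (∃ X : Finset L, X.card = d ∧ LieSubalgebra.lieSpan ℤ_[p] L (X : Set L) = ⊤) →
        LieModule.lowerCentralSeries ℤ_[p] L L c = ⊥ →
        ∃ (Lh : Type) (_ : LieRing Lh) (_ : LieAlgebra ℤ_[p] Lh),
          Finite Lh ∧
          (∀ a b : Lh, ∃ y : Lh, ⁅a, b⁆ = (p : ℤ_[p]) • y) ∧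
          (∀ a : Lh, (p : ℤ_[p]) • a = 0 → ∀ b : Lh, ⁅a, b⁆ = 0) ∧
          (∃ Y : Finset Lh, Y.card ≤ g (c, d) ∧
            LieSubalgebra.lieSpan ℤ_[p] Lh (Y : Set Lh) = ⊤) ∧
          ∃ J : LieIdeal ℤ_[p] L, Nat.card J ≤ f (p, c, d) ∧
            ∃ Om : LieIdeal ℤ_[p] Lh, (∀ a : Lh, a ∈ Om ↔ (p : ℤ_[p]) • a = 0) ∧
              ∃ φ : (L ⧸ J) →ₗ⁅ℤ_[p]⁆ (Lh ⧸ Om),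
                Function.Injective φ ∧
                Nat.card (Lh ⧸ Om) ≤ f (p, c, d) * Nat.card (L ⧸ J) := by
  choose G K h using NilpotentStructure.structure_of_fixed p
  exact ⟨fun cd => G cd.1 cd.2, fun pcd => K pcd.2.1 pcd.2.2,
    fun c d _ _ L _ _ _ hX hc => h c d L hX hc⟩
end
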